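/- Let M ∈ A be nonconstant, and suppose it is not the case that q = 2 and (T | M or T+1 | M). Then the first group cohomology H^1(G(M), Λ_M) vanishes, where G(M) = Gal(k(Λ_M)/k) acts naturally on Λ_M. -/

import Mathlib

open Polynomial IntermediateField

set_option synthInstance.maxHeartbeats 1000000
set_option maxHeartbeats 1000000

/-- `ψ` is the Carlitz module: the ring homomorphism `A = 𝔽_q[T] → End_{𝔽_q}(k̄, +)`
determined by `T ↦ (α ↦ Tα + α^q)` and `c ↦ (α ↦ cα)` for constants `c ∈ 𝔽_q`. -/
def IsCarlitz {Fq : Type} [Field Fq] [Fintype Fq]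
    (ψ : Polynomial Fq →+* AddMonoid.End (AlgebraicClosure (RatFunc Fq))) : Prop :=
  (∀ α, ψ X α = algebraMap (RatFunc Fq) (AlgebraicClosure (RatFunc Fq)) RatFunc.X * α
      + α ^ Fintype.card Fq) ∧
  (∀ (c : Fq) (α), ψ (C c) α
      = algebraMap (RatFunc Fq) (AlgebraicClosure (RatFunc Fq)) (RatFunc.C c) * α)

/-!
For a monic irreducible `P ∤ M`, a Frobenius element of `G(M)` at `P` acts on `Λ_M` as `C_P`, the
Carlitz action of `P`. Indeed `C_P(x) ≡ x ^ (q ^ deg P)` modulo `P`: in characteristic `P` the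
polynomial `C_P` has zero derivative, hence fewer than `q ^ deg P` roots, whereas a nonzero root
would generate a copy of `A/(P)`; so `0` is its only root. And `Λ_M` injects into the reduction at
any prime above `P`, because `C_M(x) ≡ M x` modulo `x ^ 2`.

By multiplicativity every `C_N` with `N` coprime to `M` is realised on `Λ_M` by an element `s` of
`G(M)`, which is central because the Galois action commutes with `C_N`. Unless `q = 2` and `M` is
divisible by `T` or `T + 1`, one can choose `N` with `N - 1` also coprime to `M`. Then
`s - 1 = C_{N-1}` is bijective on `Λ_M`, and a central `s` acts trivially on `H¹`, which therefore
vanishes.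
-/

section LinearAlgebra

variable {R V W : Type*} [CommSemiring R] [AddCommMonoid V] [Module R V] [AddCommMonoid W]
  [Module R W]

lemma map_aeval_end_apply {φ : Module.End R V} {ψ : Module.End R W} (g : V →ₗ[R] W)
    (h : ∀ v, g (φ v) = ψ (g v)) (p : R[X]) (v : V) :
    g (aeval φ p v) = aeval ψ p (g v) := by
  induction p using Polynomial.induction_on generalizing v with
  | C a => simp [Module.algebraMap_end_apply]
  | add p q hp hq => simp only [map_add, LinearMap.add_apply, hp, hq]
  | monomial n a ih =>
    simp only [pow_succ, ← mul_assoc, map_mul (aeval _) _ X, aeval_X, Module.End.mul_apply, ih, h]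

lemma bijOn_aeval_ker_aeval (φ : Module.End R V) {p q : R[X]} (h : IsCoprime p q) :
    Set.BijOn (aeval φ p) (LinearMap.ker (aeval φ q)) (LinearMap.ker (aeval φ q)) := by
  obtain ⟨a, b, hab⟩ := h
  have mapsTo (r : R[X]) :
      Set.MapsTo (aeval φ r) (LinearMap.ker (aeval φ q)) (LinearMap.ker (aeval φ q)) := by
    intro v (hv : aeval φ q v = 0)
    change (aeval φ q * aeval φ r) v = 0
    rw [← map_mul, mul_comm, map_mul, Module.End.mul_apply, hv, map_zero]
  have inverse {v : V} (hv : aeval φ q v = 0) : aeval φ a (aeval φ p v) = v := by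
    simpa [hv] using congr(aeval φ $hab v)
  refine Set.InvOn.bijOn (f' := aeval φ a) ⟨fun v hv ↦ inverse hv, fun v hv ↦ ?_⟩
    (mapsTo p) (mapsTo a)
  rw [← Module.End.mul_apply, ← map_mul, mul_comm, map_mul, Module.End.mul_apply]
  exact inverse hv

end LinearAlgebra

section Sah

open groupCohomology

/-- Sah's lemma. -/
lemma isCoboundary₁_of_mem_center {G V : Type*} [Group G] [AddCommGroup V] [DistribMulAction G V]
    {s : G} (hs : s ∈ Subgroup.center G) (hbij : Function.Bijective fun v : V ↦ s • v - v)
    {u : G → V} (hu : IsCocycle₁ u) : IsCoboundary₁ u := by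
  obtain ⟨v, hv⟩ := hbij.surjective (u s)
  refine ⟨v, fun g ↦ hbij.injective ?_⟩
  have hcomm : g * s = s * g := Subgroup.mem_center_iff.1 hs g
  have hgs : g • u s + u g = s • u g + u s := by rw [← hu g s, hcomm, hu s g]
  calc s • (g • v - v) - (g • v - v)
      = g • (s • v - v) - (s • v - v) := by
        simp only [smul_sub, smul_smul, hcomm]; abel
    _ = g • u s - u s := by simp only [← hv]
    _ = s • u g - u g := by rw [sub_eq_sub_iff_add_eq_add, hgs]

end Sah

lemma natCard_quotient_span_singleton {K : Type*} [Field K] {P : K[X]} (hP : P ≠ 0) :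
    Nat.card (K[X] ⧸ Ideal.span {P}) = Nat.card K ^ P.natDegree := by
  have : Module.Finite K (AdjoinRoot P) := (AdjoinRoot.powerBasis hP).finite
  rw [← AdjoinRoot.powerBasis_dim hP, ← (AdjoinRoot.powerBasis hP).finrank]
  exact Module.natCard_eq_pow_finrank (K := K) (V := AdjoinRoot P)

lemma exists_primesOver_isArithFrobAt {R S : Type*} (G : Type*) [CommRing R] [CommRing S]
    [Algebra R S] [FaithfulSMul R S] [Module.Finite R S] [Group G] [Finite G]
    [MulSemiringAction G S] [SMulCommClass G R S] [Algebra.IsInvariant R S G]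
    (p : Ideal R) [p.IsPrime] [Finite (R ⧸ p)] :
    ∃ Q ∈ p.primesOver S, ∃ σ : G, IsArithFrobAt R σ Q := by
  obtain ⟨⟨Q, hQ⟩⟩ := (inferInstance : Nonempty (p.primesOver S))
  have := hQ.1
  have := hQ.2
  have : Finite (S ⧸ Q) := Module.finite_of_finite (R ⧸ p)
  exact ⟨Q, hQ, IsArithFrobAt.exists_of_isInvariant R G Q⟩

lemma ncard_rootSet_lt_natDegree {E : Type*} [CommRing E] [IsDomain E] {g : E[X]} (hg : g ≠ 0)
    {v : E} (hroot : g.IsRoot v) (hroot' : g.derivative.IsRoot v) :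
    (g.rootSet E).ncard < g.natDegree := by
  classical
  have double : 1 < g.roots.count v := by
    rw [count_roots]
    exact (one_lt_rootMultiplicity_iff_isRoot hg).2 ⟨hroot, hroot'⟩
  have not_nodup : g.roots.toFinset.card ≠ g.roots.card := fun h ↦ double.not_ge <|
    Multiset.nodup_iff_count_le_one.1 (Multiset.toFinset_card_eq_card_iff_nodup.1 h) v
  calc (g.rootSet E).ncard = g.roots.toFinset.card := by
        rw [rootSet, aroots_def, Algebra.algebraMap_self, Polynomial.map_id, Set.ncard_coe_finset]
    _ < g.roots.card := (Multiset.toFinset_card_le _).lt_of_ne not_nodup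
    _ ≤ g.natDegree := card_roots' g

section Carlitz

variable {Fq : Type*} [Field Fq] [Fintype Fq]

section Action

variable (L : Type*) [CommRing L] [Algebra Fq L] [Algebra Fq[X] L]

/-- The Carlitz module on an `A`-algebra `L`, `A = 𝔽_q[T]`: the action of `A` in which `T` acts as
`x ↦ T x + x ^ q`. The paper's `x ^ N` is `carlitz L N x`. -/
noncomputable def carlitz : Fq[X] →ₐ[Fq] Module.End Fq L :=
  aeval (LinearMap.mulLeft Fq (algebraMap Fq[X] L X) +
    (FiniteField.frobeniusAlgHom Fq L).toLinearMap)

/-- The `M`-torsion points `Λ_M` of the Carlitz module that lie in `L`. -/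
noncomputable def carlitzTorsion (M : Fq[X]) : Submodule Fq L := LinearMap.ker (carlitz L M)

variable {L}

lemma mem_carlitzTorsion {M : Fq[X]} {x : L} : x ∈ carlitzTorsion L M ↔ carlitz L M x = 0 :=
  LinearMap.mem_ker

lemma carlitz_X_apply (x : L) :
    carlitz L (X : Fq[X]) x = algebraMap Fq[X] L X * x + x ^ Fintype.card Fq := by
  simp [carlitz]

lemma carlitz_C_apply (c : Fq) (x : L) : carlitz L (C c) x = c • x := by
  simp [carlitz, Module.algebraMap_end_apply]

lemma carlitz_mul_apply (N N' : Fq[X]) (x : L) :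
    carlitz L (N * N') x = carlitz L N (carlitz L N' x) := by
  rw [map_mul, Module.End.mul_apply]

lemma carlitzTorsion_le_of_dvd {M N : Fq[X]} (h : M ∣ N) :
    carlitzTorsion L M ≤ carlitzTorsion L N := by
  obtain ⟨D, rfl⟩ := h
  intro x (hx : carlitz L M x = 0)
  rw [mem_carlitzTorsion, mul_comm, carlitz_mul_apply, hx, map_zero]

lemma bijOn_carlitz_carlitzTorsion {M N : Fq[X]} (h : IsCoprime N M) :
    Set.BijOn (carlitz L N) (carlitzTorsion L M) (carlitzTorsion L M) :=
  bijOn_aeval_ker_aeval _ h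

lemma map_carlitz [IsScalarTower Fq Fq[X] L] {L' : Type*} [CommRing L'] [Algebra Fq L']
    [Algebra Fq[X] L'] [IsScalarTower Fq Fq[X] L'] (f : L →ₐ[Fq[X]] L') (N : Fq[X]) (x : L) :
    f (carlitz L N x) = carlitz L' N (f x) :=
  map_aeval_end_apply (f.restrictScalars Fq).toLinearMap (by simp) N x

section Galois

variable [IsScalarTower Fq Fq[X] L] {G : Type*} [Monoid G] [MulSemiringAction G L]
  [SMulCommClass G Fq[X] L]

lemma carlitz_smul (g : G) (N : Fq[X]) (x : L) : carlitz L N (g • x) = g • carlitz L N x :=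
  (map_carlitz (MulSemiringAction.toAlgHom Fq[X] L g) N x).symm

lemma smul_mem_carlitzTorsion {M : Fq[X]} (g : G) {x : L} (hx : x ∈ carlitzTorsion L M) :
    g • x ∈ carlitzTorsion L M := by
  rw [mem_carlitzTorsion, carlitz_smul, mem_carlitzTorsion.1 hx, smul_zero]

/-- The Galois action on `Λ_M`, for any `G` acting on `L` by `A`-algebra endomorphisms. -/
noncomputable instance carlitzTorsion.distribMulAction (M : Fq[X]) :
    DistribMulAction G (carlitzTorsion L M) :=
  let : SMul G (carlitzTorsion L M) := ⟨fun g x ↦ ⟨g • x, smul_mem_carlitzTorsion g x.2⟩⟩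
  Subtype.val_injective.distribMulAction (carlitzTorsion L M).subtype.toAddMonoidHom
    fun _ _ ↦ rfl

end Galois

end Action

/-- The polynomial `C_N` over `A` through which `N` acts on every Carlitz module, encoded as the
Carlitz action of `N` on the variable of `A[X]`. -/
noncomputable def carlitzPoly (N : Fq[X]) : Fq[X][X] := carlitz Fq[X][X] N X

lemma aeval_carlitzPoly {L : Type*} [CommRing L] [Algebra Fq L] [Algebra Fq[X] L]
    [IsScalarTower Fq Fq[X] L] (N : Fq[X]) (x : L) : aeval x (carlitzPoly N) = carlitz L N x := by
  rw [carlitzPoly, map_carlitz, aeval_X]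

lemma derivative_carlitzPoly (N : Fq[X]) : derivative (carlitzPoly N) = C N := by
  have hq : (Fintype.card Fq : Fq[X][X]) = 0 := by
    rw [← map_natCast (algebraMap Fq Fq[X][X]), Nat.cast_card_eq_zero, map_zero]
  have derivative_carlitz_X (f : Fq[X][X]) : derivative (carlitz Fq[X][X] (X : Fq[X]) f) =
      Algebra.lsmul Fq Fq Fq[X][X] (X : Fq[X]) (derivative f) := by
    simp [carlitz_X_apply, hq, derivative_pow, smul_eq_C_mul]
  have h := map_aeval_end_apply (derivative.restrictScalars Fq) (φ := carlitz Fq[X][X] X)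
    derivative_carlitz_X N X
  rw [aeval_algHom_apply, aeval_algHom_apply, aeval_X_left_apply] at h
  simpa [carlitzPoly, smul_eq_C_mul] using h

lemma X_sq_dvd_carlitzPoly_sub (N : Fq[X]) : X ^ 2 ∣ carlitzPoly N - C N * X := by
  have coeff_zero : (carlitzPoly N).coeff 0 = 0 := by
    rw [coeff_zero_eq_aeval_zero, aeval_carlitzPoly, map_zero]
  have coeff_one : (carlitzPoly N).coeff 1 = N := by
    simpa [coeff_derivative] using congr(coeff $(derivative_carlitzPoly N) 0)
  rw [X_pow_dvd_iff]
  intro i hi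
  interval_cases i <;> simp [coeff_zero, coeff_one]

lemma isMonicOfDegree_carlitzPoly {N : Fq[X]} {n : ℕ} (hN : IsMonicOfDegree N n) :
    IsMonicOfDegree (carlitzPoly N) (Fintype.card Fq ^ n) := by
  induction n generalizing N with
  | zero =>
    rw [isMonicOfDegree_zero_iff.1 hN, carlitzPoly, map_one]
    exact isMonicOfDegree_X _
  | succ n ih =>
    have hdivX : IsMonicOfDegree N.divX n := by
      refine (isMonicOfDegree_X Fq).of_mul_left ?_
      rw [eq_sub_of_add_eq (X_mul_divX_add N), add_comm]
      exact hN.sub (by simp)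
    have horner : carlitzPoly N = carlitzPoly N.divX ^ Fintype.card Fq +
        (C X * carlitzPoly N.divX + N.coeff 0 • X) := by
      conv_lhs => rw [← X_mul_divX_add N, carlitzPoly, map_add, LinearMap.add_apply,
        carlitz_mul_apply, carlitz_X_apply, carlitz_C_apply]
      simp only [carlitzPoly, algebraMap_eq]
      ring
    rw [horner, pow_succ]
    refine ((ih hdivX).pow _).add_right ?_
    have hlt : Fintype.card Fq ^ n < Fintype.card Fq ^ n * Fintype.card Fq :=
      lt_mul_of_one_lt_right (pow_pos Fintype.card_pos n) Fintype.one_lt_card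
    refine (natDegree_add_le_of_degree_le ?_ ?_).trans_lt hlt
    · exact (natDegree_C_mul_le _ _).trans (ih hdivX).natDegree_eq.le
    · exact (natDegree_smul_le _ _).trans
        (natDegree_X_le.trans (Nat.one_le_pow _ _ Fintype.card_pos))

lemma coe_carlitzTorsion_eq_rootSet (F : Type*) {L : Type*} [CommRing F] [IsDomain F] [CommRing L]
    [IsDomain L] [Algebra Fq L] [Algebra Fq[X] F] [Algebra Fq[X] L] [IsScalarTower Fq Fq[X] L]
    [Algebra F L] [IsScalarTower Fq[X] F L] [Module.IsTorsionFree F L] {M : Fq[X]}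
    (hM : (carlitzPoly M).map (algebraMap Fq[X] F) ≠ 0) :
    (carlitzTorsion L M : Set L) = ((carlitzPoly M).map (algebraMap Fq[X] F)).rootSet L := by
  ext x
  rw [mem_rootSet_of_ne hM, aeval_map_algebraMap, aeval_carlitzPoly, SetLike.mem_coe,
    mem_carlitzTorsion]

lemma card_pow_natDegree_le_ncard_carlitzTorsion {E : Type*} [CommRing E] [Algebra Fq E]
    [Algebra Fq[X] E] {P : Fq[X]} (hP : Irreducible P)
    (hfin : (carlitzTorsion E P : Set E).Finite) (hne : carlitzTorsion E P ≠ ⊥) :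
    Fintype.card Fq ^ P.natDegree ≤ (carlitzTorsion E P : Set E).ncard := by
  obtain ⟨v, hv, hv0⟩ := Submodule.exists_mem_ne_zero_of_ne_bot hne
  have dvd_of_carlitz_eq_zero {N : Fq[X]} (hN : carlitz E N v = 0) : P ∣ N := by
    by_contra hPN
    have hinj := (bijOn_carlitz_carlitzTorsion (L := E) (hP.coprime_iff_not_dvd.2 hPN)).injOn
    exact hv0 (hinj hN (zero_mem _) ((mem_carlitzTorsion.1 hv).trans (map_zero _).symm))
  rw [← Nat.card_eq_fintype_card, ← natCard_quotient_span_singleton hP.ne_zero]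
  have := hfin.to_subtype
  refine Nat.card_le_card_of_injective
    (fun y : Fq[X] ⧸ Ideal.span {P} ↦ (⟨carlitz E y.out v, ?_⟩ : (carlitzTorsion E P : Set E)))
    fun y z hyz ↦ ?_
  · rw [SetLike.mem_coe, mem_carlitzTorsion, ← carlitz_mul_apply, mul_comm, carlitz_mul_apply,
      mem_carlitzTorsion.1 hv, map_zero]
  · have hdvd : P ∣ y.out - z.out := dvd_of_carlitz_eq_zero <| by
      rw [map_sub, LinearMap.sub_apply, sub_eq_zero]
      exact congrArg Subtype.val hyz
    rw [← Ideal.mem_span_singleton, ← Ideal.Quotient.eq] at hdvd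
    simpa [Ideal.Quotient.mk_out] using hdvd

lemma carlitzTorsion_eq_bot_of_algebraMap_eq_zero {E : Type*} [CommRing E] [IsDomain E]
    [Algebra Fq E] [Algebra Fq[X] E] [IsScalarTower Fq Fq[X] E] {P : Fq[X]} (hP : Irreducible P)
    (hPm : P.Monic) (hPE : algebraMap Fq[X] E P = 0) : carlitzTorsion E P = ⊥ := by
  by_contra hne
  have hmonic : IsMonicOfDegree (carlitzPoly P) (Fintype.card Fq ^ P.natDegree) :=
    isMonicOfDegree_carlitzPoly ⟨rfl, hPm⟩
  set g : E[X] := (carlitzPoly P).map (algebraMap Fq[X] E) with hg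
  have hg0 : g ≠ 0 := (hmonic.monic.map _).ne_zero
  have htors : (carlitzTorsion E P : Set E) = g.rootSet E := coe_carlitzTorsion_eq_rootSet E hg0
  obtain ⟨v, hv, -⟩ := Submodule.exists_mem_ne_zero_of_ne_bot hne
  have hroot : g.IsRoot v := by
    rwa [← SetLike.mem_coe, htors, mem_rootSet_of_ne hg0, coe_aeval_eq_eval] at hv
  have hroot' : g.derivative.IsRoot v := by
    rw [derivative_map, derivative_carlitzPoly, map_C, hPE, C_0]
    exact eval_zero
  have hle := card_pow_natDegree_le_ncard_carlitzTorsion hP (htors ▸ g.rootSet_finite E) hne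
  have hlt := ncard_rootSet_lt_natDegree hg0 hroot hroot'
  rw [htors] at hle
  rw [hg, hmonic.monic.natDegree_map, hmonic.natDegree_eq] at hlt
  exact hle.not_gt hlt

lemma map_carlitzPoly_of_algebraMap_eq_zero {E : Type*} [Field E] [IsAlgClosed E] [Algebra Fq E]
    [Algebra Fq[X] E] [IsScalarTower Fq Fq[X] E] {P : Fq[X]} (hP : Irreducible P) (hPm : P.Monic)
    (hPE : algebraMap Fq[X] E P = 0) :
    (carlitzPoly P).map (algebraMap Fq[X] E) = X ^ Fintype.card Fq ^ P.natDegree := by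
  have hmonic : IsMonicOfDegree (carlitzPoly P) (Fintype.card Fq ^ P.natDegree) :=
    isMonicOfDegree_carlitzPoly ⟨rfl, hPm⟩
  set g : E[X] := (carlitzPoly P).map (algebraMap Fq[X] E) with hg
  have hsplits : g.Splits := IsAlgClosed.splits g
  have hroots : g.roots = Multiset.replicate (Fintype.card Fq ^ P.natDegree) 0 := by
    rw [Multiset.eq_replicate]
    refine ⟨?_, fun x hx ↦ ?_⟩
    · rw [← hsplits.natDegree_eq_card_roots, hg, hmonic.monic.natDegree_map, hmonic.natDegree_eq]
    · have hx0 : x ∈ carlitzTorsion E P := by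
        rw [mem_carlitzTorsion, ← aeval_carlitzPoly, ← eval_map_algebraMap]
        exact isRoot_of_mem_roots hx
      rwa [carlitzTorsion_eq_bot_of_algebraMap_eq_zero hP hPm hPE] at hx0
  rw [hsplits.eq_prod_roots_of_monic (hmonic.monic.map _), hroots]
  simp

lemma carlitz_apply_of_algebraMap_eq_zero {E : Type*} [CommRing E] [IsDomain E] [Algebra Fq E]
    [Algebra Fq[X] E] [IsScalarTower Fq Fq[X] E] {P : Fq[X]} (hP : Irreducible P) (hPm : P.Monic)
    (hPE : algebraMap Fq[X] E P = 0) (x : E) :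
    carlitz E P x = x ^ Fintype.card Fq ^ P.natDegree := by
  let Ω := AlgebraicClosure (FractionRing E)
  have hPΩ : algebraMap Fq[X] Ω P = 0 := by
    rw [IsScalarTower.algebraMap_apply Fq[X] E Ω, hPE, map_zero]
  have hinj : Function.Injective (IsScalarTower.toAlgHom Fq[X] E Ω) :=
    (algebraMap (FractionRing E) Ω).injective.comp (IsFractionRing.injective E (FractionRing E))
  apply hinj
  rw [map_carlitz, ← aeval_carlitzPoly, ← eval_map_algebraMap,
    map_carlitzPoly_of_algebraMap_eq_zero hP hPm hPΩ, eval_X_pow, map_pow]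

section Frobenius

lemma eq_zero_of_mem_carlitzTorsion_of_mem {B : Type*} [CommRing B] [IsDomain B] [Algebra Fq B]
    [Algebra Fq[X] B] [IsScalarTower Fq Fq[X] B] {M : Fq[X]} {Q : Ideal B}
    (hM : algebraMap Fq[X] B M ∉ Q) {x : B} (hx : x ∈ carlitzTorsion B M) (hxQ : x ∈ Q) :
    x = 0 := by
  obtain ⟨g, hg⟩ := X_sq_dvd_carlitzPoly_sub M
  have hfactor : x * (algebraMap Fq[X] B M + x * aeval x g) = 0 := by
    have h := congr(aeval x $hg)
    rw [map_sub, aeval_carlitzPoly, mem_carlitzTorsion.1 hx] at h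
    simp only [map_mul, aeval_C, aeval_X, map_pow] at h
    linear_combination -h
  refine (mul_eq_zero.1 hfactor).resolve_right fun h ↦ hM ?_
  rw [eq_neg_of_add_eq_zero_left h]
  exact Q.neg_mem (Q.mul_mem_right _ hxQ)

lemma isIntegral_of_mem_carlitzTorsion {L : Type*} [CommRing L] [Algebra Fq L] [Algebra Fq[X] L]
    [IsScalarTower Fq Fq[X] L] {M : Fq[X]} (hM : M ≠ 0) {x : L} (hx : x ∈ carlitzTorsion L M) :
    IsIntegral Fq[X] x := by
  have hmonic : (M * C M.leadingCoeff⁻¹).Monic := monic_mul_leadingCoeff_inv hM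
  refine ⟨carlitzPoly (M * C M.leadingCoeff⁻¹),
    (isMonicOfDegree_carlitzPoly ⟨rfl, hmonic⟩).monic, ?_⟩
  rw [← aeval_def, aeval_carlitzPoly]
  exact carlitzTorsion_le_of_dvd (dvd_mul_right _ _) hx

lemma smul_eq_carlitz_of_isArithFrobAt {B G : Type*} [CommRing B] [IsDomain B] [Algebra Fq B]
    [Algebra Fq[X] B] [IsScalarTower Fq Fq[X] B] [Monoid G] [MulSemiringAction G B]
    [SMulCommClass G Fq[X] B] {P M : Fq[X]} (hP : Irreducible P) (hPm : P.Monic)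
    (hPM : ¬ P ∣ M) {Q : Ideal B} (hQ : Q ∈ (Ideal.span {P}).primesOver B) {σ : G}
    (hσ : IsArithFrobAt Fq[X] σ Q) {x : B} (hx : x ∈ carlitzTorsion B M) :
    σ • x = carlitz B P x := by
  have := hQ.1
  have hover : ∀ N : Fq[X], algebraMap Fq[X] B N ∈ Q ↔ P ∣ N := fun N ↦ by
    rw [← Ideal.mem_span_singleton, hQ.2.over, Ideal.mem_under]
  refine sub_eq_zero.1 (eq_zero_of_mem_carlitzTorsion_of_mem ((hover M).not.2 hPM) ?_ ?_)
  · exact sub_mem (smul_mem_carlitzTorsion σ hx)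
      ((bijOn_carlitz_carlitzTorsion (hP.coprime_iff_not_dvd.2 hPM)).mapsTo hx)
  · have hfrob := hσ x
    rw [← hQ.2.over, natCard_quotient_span_singleton hP.ne_zero, Nat.card_eq_fintype_card] at hfrob
    have hcarlitz : Ideal.Quotient.mk Q (carlitz B P x) = Ideal.Quotient.mk Q x ^
        Fintype.card Fq ^ P.natDegree := by
      rw [← carlitz_apply_of_algebraMap_eq_zero hP hPm
        (Ideal.Quotient.eq_zero_iff_mem.2 ((hover P).2 dvd_rfl))]
      exact map_carlitz (Ideal.Quotient.mkₐ Fq[X] Q) P x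
    rw [← Ideal.Quotient.eq, hcarlitz, ← map_pow]
    exact Ideal.Quotient.eq.2 hfrob

variable {F L : Type*} [Field F] [Field L] [Algebra Fq L] [Algebra Fq[X] F]
  [IsFractionRing Fq[X] F] [Algebra Fq[X] L] [IsScalarTower Fq Fq[X] L] [Algebra F L]
  [IsScalarTower Fq[X] F L] [FiniteDimensional F L] [IsGalois F L]

lemma exists_algEquiv_eq_carlitz_of_irreducible {P M : Fq[X]} (hP : Irreducible P)
    (hPm : P.Monic) (hM : M ≠ 0) (hPM : ¬ P ∣ M) :
    ∃ σ : Gal(L/F), ∀ x ∈ carlitzTorsion L M, σ x = carlitz L P x := by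
  let B := integralClosure Fq[X] L
  have : IsFractionRing B L := integralClosure.isFractionRing_of_finite_extension F L
  have : FaithfulSMul Fq[X] L := FaithfulSMul.trans Fq[X] F L
  have : Module.Finite Fq[X] B := IsIntegralClosure.finite Fq[X] F L B
  have : Algebra.IsInvariant Fq[X] B (B ≃ₐ[Fq[X]] B) :=
    Algebra.isInvariant_of_isGalois' Fq[X] F L B
  have : Finite (B ≃ₐ[Fq[X]] B) := Finite.of_equiv _ (galRestrict Fq[X] F L B).toEquiv
  have : (Ideal.span {P}).IsPrime := (Ideal.span_singleton_prime hP.ne_zero).2 hP.prime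
  have : Finite (Fq[X] ⧸ Ideal.span {P}) := Nat.finite_of_card_ne_zero <| by
    rw [natCard_quotient_span_singleton hP.ne_zero]
    exact pow_ne_zero _ Nat.card_pos.ne'
  obtain ⟨Q, hQ, τ, hτ⟩ :=
    exists_primesOver_isArithFrobAt (S := B) (B ≃ₐ[Fq[X]] B) (Ideal.span {P})
  refine ⟨(galRestrict Fq[X] F L B).symm τ, fun x hx ↦ ?_⟩
  obtain ⟨b, rfl⟩ := IsIntegralClosure.isIntegral_iff (A := B).1
    (isIntegral_of_mem_carlitzTorsion hM hx)
  have hb : b ∈ carlitzTorsion B M := by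
    apply FaithfulSMul.algebraMap_injective B L
    rw [map_zero, ← mem_carlitzTorsion.1 hx]
    exact map_carlitz (IsScalarTower.toAlgHom Fq[X] B L) M b
  rw [galRestrict_symm_algebraMap_apply]
  exact (congrArg _ (smul_eq_carlitz_of_isArithFrobAt hP hPm hPM hQ hτ hb)).trans
    (map_carlitz (IsScalarTower.toAlgHom Fq[X] B L) P b)

lemma exists_algEquiv_eq_carlitz_of_monic {M : Fq[X]} (hM : M ≠ 0) {N : Fq[X]} (hN : N.Monic)
    (hNM : IsCoprime N M) : ∃ σ : Gal(L/F), ∀ x ∈ carlitzTorsion L M, σ x = carlitz L N x := by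
  induction hn : N.natDegree using Nat.strong_induction_on generalizing N with
  | _ n ih =>
  by_cases hunit : IsUnit N
  · exact ⟨1, by simp [hN.eq_one_of_isUnit hunit]⟩
  obtain ⟨P, hPm, hP, N', rfl⟩ := exists_monic_irreducible_factor N hunit
  have hN' : N'.Monic := hPm.of_mul_monic_left hN
  rw [hPm.natDegree_mul hN'] at hn
  have hPM : ¬ P ∣ M := hP.coprime_iff_not_dvd.1 hNM.of_mul_left_left
  obtain ⟨σ, hσ⟩ := exists_algEquiv_eq_carlitz_of_irreducible (F := F) (L := L) hP hPm hM hPM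
  obtain ⟨τ, hτ⟩ := ih N'.natDegree (by have := hP.natDegree_pos; lia) hN'
    hNM.of_mul_left_right rfl
  refine ⟨σ * τ, fun x hx ↦ ?_⟩
  rw [AlgEquiv.mul_apply, hτ x hx, carlitz_mul_apply]
  exact hσ _ ((bijOn_carlitz_carlitzTorsion hNM.of_mul_left_right).mapsTo hx)

lemma exists_algEquiv_eq_carlitz {M : Fq[X]} (hM : M ≠ 0) {N : Fq[X]} (hNM : IsCoprime N M) :
    ∃ σ : Gal(L/F), ∀ x ∈ carlitzTorsion L M, σ x = carlitz L N x := by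
  -- `N + D` is monic and acts on `Λ_M` as `N` does.
  let D := M * C M.leadingCoeff⁻¹ * X ^ (N.natDegree + 1)
  have hD : IsMonicOfDegree D (M.natDegree + (N.natDegree + 1)) := by
    have hM' : IsMonicOfDegree (M * C M.leadingCoeff⁻¹) M.natDegree :=
      ⟨natDegree_mul_leadingCoeff_inv M hM, monic_mul_leadingCoeff_inv hM⟩
    exact hM'.mul (isMonicOfDegree_X_pow Fq _)
  have hMD : M ∣ D := Dvd.intro _ (mul_assoc _ _ _).symm
  have hcop : IsCoprime (D + N) M := by
    obtain ⟨D', hD'⟩ := hMD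
    rw [hD', add_comm]
    exact hNM.add_mul_left_left D'
  obtain ⟨σ, hσ⟩ := exists_algEquiv_eq_carlitz_of_monic (F := F) (L := L) hM
    (hD.add_right (by lia)).monic hcop
  refine ⟨σ, fun x hx ↦ ?_⟩
  rw [hσ x hx, map_add, LinearMap.add_apply,
    mem_carlitzTorsion.1 (carlitzTorsion_le_of_dvd hMD hx), zero_add]

end Frobenius

lemma exists_isCoprime_isCoprime_sub_one {M : Fq[X]}
    (hM : ¬ (Fintype.card Fq = 2 ∧ (X ∣ M ∨ X + 1 ∣ M))) :
    ∃ N : Fq[X], IsCoprime N M ∧ IsCoprime (N - 1) M := by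
  by_cases hq : Fintype.card Fq = 2
  · have two_eq_zero : (2 : Fq[X]) = 0 := by
      rw [← Nat.cast_ofNat, ← hq, ← map_natCast C, Nat.cast_card_eq_zero, C_0]
    have hsub : (X - C 1 : Fq[X]) = X + 1 := by
      rw [C_1]
      linear_combination -two_eq_zero
    have hX : ¬ X ∣ M ∧ ¬ X - C 1 ∣ M := by rw [hsub]; tauto
    exact ⟨X, irreducible_X.coprime_iff_not_dvd.2 hX.1,
      (irreducible_X_sub_C 1).coprime_iff_not_dvd.2 hX.2⟩
  · obtain ⟨c, hc0, hc1⟩ : ∃ c : Fq, c ≠ 0 ∧ c ≠ 1 := by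
      by_contra! h
      rw [← Nat.card_eq_fintype_card, Nat.card_eq_two_iff' 0] at hq
      exact hq ⟨1, one_ne_zero, h⟩
    have isCoprime_C {a : Fq} (ha : a ≠ 0) : IsCoprime (C a) M :=
      isCoprime_one_left.of_isCoprime_of_dvd_left (isUnit_C.2 ha.isUnit).dvd
    exact ⟨C c, isCoprime_C hc0, by simpa using isCoprime_C (sub_ne_zero.2 hc1)⟩

lemma separable_map_carlitzPoly {F : Type*} [Field F] [Algebra Fq[X] F] {M : Fq[X]}
    (hM : algebraMap Fq[X] F M ≠ 0) :
    ((carlitzPoly M).map (algebraMap Fq[X] F)).Separable := by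
  rw [separable_def, derivative_map, derivative_carlitzPoly, map_C]
  exact isCoprime_one_right.of_isCoprime_of_dvd_right (isUnit_C.2 hM.isUnit).dvd

section Cohomology

variable {F L : Type*} [Field F] [Field L] [Algebra Fq L] [Algebra Fq[X] F]
  [Algebra Fq[X] L] [IsScalarTower Fq Fq[X] L] [Algebra F L] [IsScalarTower Fq[X] F L]

lemma mem_center_of_eq_carlitz {M N : Fq[X]} (hM : algebraMap Fq[X] F M ≠ 0)
    [IsSplittingField F L ((carlitzPoly M).map (algebraMap Fq[X] F))] {s : Gal(L/F)}
    (hs : ∀ x ∈ carlitzTorsion L M, s x = carlitz L N x) : s ∈ Subgroup.center Gal(L/F) := by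
  set f := (carlitzPoly M).map (algebraMap Fq[X] F)
  have agree (g : Gal(L/F)) {x : L} (hx : x ∈ carlitzTorsion L M) : g (s x) = s (g x) :=
    calc g (s x) = g (carlitz L N x) := by rw [hs x hx]
      _ = carlitz L N (g x) := (carlitz_smul g N x).symm
      _ = s (g x) := (hs _ (smul_mem_carlitzTorsion g hx)).symm
  have hroots : (carlitzTorsion L M : Set L) = f.rootSet L :=
    coe_carlitzTorsion_eq_rootSet F (separable_map_carlitzPoly hM).ne_zero
  refine Subgroup.mem_center_iff.2 fun g ↦ AlgEquiv.coe_toAlgHom_injective <|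
    AlgHom.ext_of_adjoin_eq_top (IsSplittingField.adjoin_rootSet L f) fun x hx ↦ ?_
  rw [← hroots] at hx
  exact agree g hx

open groupCohomology in
theorem isCoboundary₁_carlitzTorsion [IsFractionRing Fq[X] F] {M : Fq[X]} (hM : M ≠ 0)
    (hq : ¬ (Fintype.card Fq = 2 ∧ (X ∣ M ∨ X + 1 ∣ M)))
    [IsSplittingField F L ((carlitzPoly M).map (algebraMap Fq[X] F))]
    {u : Gal(L/F) → carlitzTorsion L M} (hu : IsCocycle₁ u) : IsCoboundary₁ u := by
  have hMF : algebraMap Fq[X] F M ≠ 0 := by simpa using hM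
  let g := (carlitzPoly M).map (algebraMap Fq[X] F)
  have : FiniteDimensional F L := IsSplittingField.finiteDimensional L g
  have : IsGalois F L := IsGalois.of_separable_splitting_field (separable_map_carlitzPoly hMF)
  obtain ⟨N, hN, hN'⟩ := exists_isCoprime_isCoprime_sub_one hq
  obtain ⟨s, hs⟩ := exists_algEquiv_eq_carlitz (F := F) (L := L) hM hN
  refine isCoboundary₁_of_mem_center (mem_center_of_eq_carlitz hMF hs) ?_ hu
  have hbij := bijOn_carlitz_carlitzTorsion (L := L) hN'
  have smul_sub_self : (fun v : carlitzTorsion L M ↦ s • v - v) = hbij.mapsTo.restrict :=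
    funext fun v ↦ Subtype.ext <| by
      rw [Set.MapsTo.val_restrict_apply, map_sub, map_one, LinearMap.sub_apply, ← hs v v.2]
      rfl
  rw [smul_sub_self]
  exact hbij.bijective

end Cohomology

end Carlitz

instance isScalarTower_polynomial_intermediateField {k : Type*} [Field k]
    (K : IntermediateField (RatFunc k) (AlgebraicClosure (RatFunc k))) : IsScalarTower k k[X] K :=
  IsScalarTower.to₁₂₄ k k[X] (RatFunc k) K

section IsCarlitz

variable {Fq : Type} [Field Fq] [Fintype Fq]
  {ψ : Polynomial Fq →+* AddMonoid.End (AlgebraicClosure (RatFunc Fq))}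

lemma IsCarlitz.apply_eq_carlitz (hψ : IsCarlitz ψ) (N : Fq[X])
    (x : AlgebraicClosure (RatFunc Fq)) : ψ N x = carlitz (AlgebraicClosure (RatFunc Fq)) N x := by
  let Ω := AlgebraicClosure (RatFunc Fq)
  have hX : algebraMap Fq[X] Ω X = algebraMap (RatFunc Fq) Ω RatFunc.X := by
    rw [IsScalarTower.algebraMap_apply Fq[X] (RatFunc Fq) Ω, RatFunc.algebraMap_X]
  have hC (c : Fq) : algebraMap Fq Ω c = algebraMap (RatFunc Fq) Ω (RatFunc.C c) := by
    rw [IsScalarTower.algebraMap_apply Fq (RatFunc Fq) Ω, RatFunc.algebraMap_eq_C]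
  have hψ_eq : ψ = (Module.toAddMonoidEnd (Module.End Fq Ω) Ω).comp (carlitz Ω).toRingHom := by
    refine Polynomial.ringHom_ext (fun c ↦ ?_) ?_
    · ext y
      refine (hψ.2 c y).trans ?_
      rw [← hC, ← Algebra.smul_def, ← carlitz_C_apply]
      rfl
    · ext y
      refine (hψ.1 y).trans ?_
      rw [← hX, ← carlitz_X_apply]
      rfl
  exact congr($hψ_eq N x)

lemma IsCarlitz.mem_carlitzTorsion_iff (hψ : IsCarlitz ψ) {M : Fq[X]}
    {K : IntermediateField (RatFunc Fq) (AlgebraicClosure (RatFunc Fq))} {x : K} :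
    x ∈ carlitzTorsion K M ↔ ψ M x = 0 := by
  have hx := map_carlitz (K.val.restrictScalars Fq[X]) M x
  rw [hψ.apply_eq_carlitz, mem_carlitzTorsion, ← map_eq_zero (K.val.restrictScalars Fq[X]), hx]
  rfl

lemma IsCarlitz.isSplittingField_adjoin (hψ : IsCarlitz ψ) {M : Fq[X]} (hM : M ≠ 0) :
    IsSplittingField (RatFunc Fq) (adjoin (RatFunc Fq) {x | ψ M x = 0})
      ((carlitzPoly M).map (algebraMap Fq[X] (RatFunc Fq))) := by
  have hMF : algebraMap Fq[X] (RatFunc Fq) M ≠ 0 := by simpa using hM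
  have hroots : {x | ψ M x = 0} =
      ((carlitzPoly M).map (algebraMap Fq[X] (RatFunc Fq))).rootSet
        (AlgebraicClosure (RatFunc Fq)) := by
    rw [← coe_carlitzTorsion_eq_rootSet _ (separable_map_carlitzPoly hMF).ne_zero]
    ext x
    rw [Set.mem_ofPred_eq, hψ.apply_eq_carlitz, SetLike.mem_coe, mem_carlitzTorsion]
  rw [hroots]
  exact adjoin_rootSet_isSplittingField (IsAlgClosed.splits _)

end IsCarlitz

/-- **Proposition 2.7.**
Let `M ∈ A = 𝔽_q[T]` be nonconstant, and suppose it is not the case that `q = 2` and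
(`T ∣ M` or `T+1 ∣ M`).  Then `H¹(G(M), Λ_M) = 0`, where `G(M) = Gal(k(Λ_M)/k)` acts
naturally on the `M`-torsion points `Λ_M` of the Carlitz module: explicitly, every
`1`-cocycle `u : G(M) → Λ_M` (i.e. `u(στ) = u(σ) + σ(u(τ))`) is a coboundary (i.e.
there is `λ₀ ∈ Λ_M` with `u(σ) = σ(λ₀) - λ₀` for all `σ`). -/
theorem carlitz_H1_torsion_vanishes
    {Fq : Type} [Field Fq] [Fintype Fq]
    (ψ : Polynomial Fq →+* AddMonoid.End (AlgebraicClosure (RatFunc Fq)))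
    (hψ : IsCarlitz ψ)
    (M : Polynomial Fq) (hM : 0 < M.natDegree)
    (hq : ¬ (Fintype.card Fq = 2 ∧ (X ∣ M ∨ X + 1 ∣ M)))
    -- K = k(Λ_M)
    (K : IntermediateField (RatFunc Fq) (AlgebraicClosure (RatFunc Fq)))
    (hK : K = adjoin (RatFunc Fq) {x | ψ M x = 0})
    -- a 1-cocycle of G(M) = Gal(K/k) with values in Λ_M
    (u : (↥K ≃ₐ[RatFunc Fq] ↥K) → ↥K)
    (hu_tors : ∀ σ, ψ M ((u σ : AlgebraicClosure (RatFunc Fq))) = 0)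
    (hu_cocycle : ∀ σ τ, u (σ * τ) = u σ + σ (u τ)) :
    -- it is a coboundary
    ∃ lam : ↥K, ψ M ((lam : AlgebraicClosure (RatFunc Fq))) = 0 ∧
      ∀ σ, u σ = σ lam - lam := by
  subst hK
  have hM0 : M ≠ 0 := ne_zero_of_natDegree_gt hM
  have := hψ.isSplittingField_adjoin hM0
  let v (σ : Gal(_/_)) : carlitzTorsion (adjoin (RatFunc Fq) {x | ψ M x = 0}) M :=
    ⟨u σ, hψ.mem_carlitzTorsion_iff.2 (hu_tors σ)⟩
  have hv : groupCohomology.IsCocycle₁ v := fun σ τ ↦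
    Subtype.ext <| (hu_cocycle σ τ).trans (add_comm _ _)
  obtain ⟨lam, hlam⟩ := isCoboundary₁_carlitzTorsion hM0 hq hv
  exact ⟨lam, hψ.mem_carlitzTorsion_iff.1 lam.2, fun σ ↦ congrArg Subtype.val (hlam σ).symm⟩
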